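/- Let W = F_{q^4} × F_{q^4} and let U, V be F_q-subspaces of W with dim_{F_q} U = dim_{F_q} V = 4, such that the maximum field of linearity of L_U is F_q (for every divisor e of 4 with e > 1 there is no F_{q^e}-subspace U' of W with L_{U'} = L_U). If L_U = L_V, then there exist a field automorphism σ of F_{q^4} and an invertible σ-semilinear map φ : W → W (an additive bijection with φ(cw) = σ(c)φ(w) for all c ∈ F_{q^4}, w ∈ W) such that φ(U) = V. In other words, every F_q-linear set of rank 4 of PG(1,q^4) with maximum field of linearity F_q is simple. -/

import Mathlib

/-- The `F_q`-linear set of PG(1,q^n) defined by a set `S ⊆ F × F`: the set of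
one-dimensional `F`-subspaces spanned by the nonzero vectors of `S`. -/
def linSet (F : Type) [Field F] (S : Set (F × F)) : Set (Submodule F (F × F)) :=
  {X | ∃ u ∈ S, u ≠ 0 ∧ X = Submodule.span F {u}}

/-!
Let `f` be an `F_q`-linear map of `K = F_{q^n}`. Every slope `f x / x` is attained by a number of
units `x` that is `-1` modulo the characteristic, so summing a function of the slope over `Kˣ`
amounts to summing it over the set of directions of `f`. Applied to products of Frobenius powers,
this shows that the directions determine all principal minors of the Dickson matrix of `f`, with
permanents in place of determinants: expanding the product, only the monomials indexed by
permutations survive the summation over `Kˣ`.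

For `n = 4` these minors determine the linearized polynomial `f` up to two operations: conjugation
by a scalar (through Hilbert 90) and passage to the adjoint for the trace form. Both carry the
graph of `f` to a semilinearly equivalent one; for the adjoint the companion automorphism is the
square of the Frobenius. Finally, a linear set of rank `n` misses some point of the line, and moving
that point to `⟨(0, 1)⟩` turns the subspaces into graphs.
-/

section Digits

variable {n q : ℕ}

theorem pow_mod_modEq (hq : 0 < q) (a : ℕ) : q ^ (a % n) ≡ q ^ a [MOD q ^ n - 1] := by
  have hqn : q ^ n ≡ 1 [MOD q ^ n - 1] :=
    ((Nat.modEq_iff_dvd' (Nat.one_le_pow _ _ hq)).2 dvd_rfl).symm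
  calc q ^ (a % n) = q ^ (a % n) * 1 ^ (a / n) := by simp
    _ ≡ q ^ (a % n) * (q ^ n) ^ (a / n) [MOD q ^ n - 1] := (hqn.symm.pow _).mul_left _
    _ = q ^ a := by rw [← pow_mul, ← pow_add, Nat.mod_add_div]

theorem eq_of_sum_mul_pow_eq {c d : Fin n → ℕ} (hc : ∀ i, c i < q) (hd : ∀ i, d i < q)
    (h : ∑ i, c i * q ^ (i : ℕ) = ∑ i, d i * q ^ (i : ℕ)) : c = d := by
  have hcd : (fun i => (⟨c i, hc i⟩ : Fin q)) = fun i => ⟨d i, hd i⟩ :=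
    finFunctionFinEquiv.injective <| Fin.ext <| by simpa only [finFunctionFinEquiv_apply] using h
  exact funext fun i => congrArg Fin.val (congrFun hcd i)

theorem sum_mul_pow_lt {c : Fin n → ℕ} (hc : ∀ i, c i < q) :
    ∑ i, c i * q ^ (i : ℕ) < q ^ n := by
  simpa only [finFunctionFinEquiv_apply] using
    (finFunctionFinEquiv fun i => (⟨c i, hc i⟩ : Fin q)).isLt

theorem sum_mul_pow_pos {c : Fin n → ℕ} (hq : 0 < q) (hc : c ≠ 0) :
    0 < ∑ i, c i * q ^ (i : ℕ) := by
  obtain ⟨i, hi⟩ := Function.ne_iff.1 hc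
  exact Finset.sum_pos' (fun _ _ => Nat.zero_le _)
    ⟨i, Finset.mem_univ i, Nat.mul_pos (Nat.pos_of_ne_zero hi) (pow_pos hq _)⟩

theorem eq_of_modEq_of_pos_of_le {a b N : ℕ} (ha : 0 < a) (haN : a ≤ N) (hb : 0 < b)
    (hbN : b ≤ N) (h : a ≡ b [MOD N]) : a = b := by
  wlog hab : a ≤ b generalizing a b
  · exact (this hb hbN ha haN h.symm (le_of_not_ge hab)).symm
  have := Nat.eq_zero_of_dvd_of_lt ((Nat.modEq_iff_dvd' hab).1 h) (by omega)
  omega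

theorem exists_carry [NeZero n] (hq : 0 < q) {c : Fin n → ℕ} {j : Fin n} (hj : q ≤ c j) :
    ∃ c' : Fin n → ℕ, c' ≠ 0 ∧ ∑ i, c' i + q = ∑ i, c i + 1 ∧
      ∑ i, c' i * q ^ (i : ℕ) ≡ ∑ i, c i * q ^ (i : ℕ) [MOD q ^ n - 1] := by
  obtain ⟨b, rfl⟩ : ∃ b, c = b + Pi.single j q :=
    ⟨c - Pi.single j q, (tsub_add_cancel_of_le fun i => by
      rcases eq_or_ne i j with rfl | hij <;> simp [*]).symm⟩
  have hcarry : q ^ ((j + 1 : Fin n) : ℕ) ≡ q * q ^ (j : ℕ) [MOD q ^ n - 1] := by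
    rw [← pow_succ', Fin.val_add, Fin.val_one', Nat.add_mod_mod]
    exact pow_mod_modEq hq _
  refine ⟨b + Pi.single (j + 1) 1, fun h => by simpa using congrFun h (j + 1), ?_, ?_⟩
  · simp only [Pi.add_apply, Finset.sum_add_distrib, Finset.sum_pi_single', Finset.mem_univ,
      if_true]
    ring
  · simpa only [Pi.add_apply, add_mul, Finset.sum_add_distrib, Pi.single_apply, ite_mul, one_mul,
      zero_mul, Finset.sum_ite_eq', Finset.mem_univ, if_true] using hcarry.add_left _

-- Carrying a digit `≥ q` lowers the digit sum, so the all-ones word cannot be reached by carries.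
theorem eq_one_of_sum_mul_pow_modEq (hq : 2 ≤ q) {c : Fin n → ℕ} (hc : c ≠ 0)
    (hsum : ∑ i, c i ≤ n)
    (h : ∑ i, c i * q ^ (i : ℕ) ≡ ∑ i : Fin n, q ^ (i : ℕ) [MOD q ^ n - 1]) : c = 1 := by
  induction hN : ∑ i, c i using Nat.strong_induction_on generalizing c with
  | _ N ih =>
    obtain ⟨i₀, -⟩ := Function.ne_iff.1 hc
    have : NeZero n := NeZero.of_pos i₀.pos
    by_cases hdigits : ∀ i, c i < q
    · have hone : ∀ i, (1 : Fin n → ℕ) i < q := fun _ => hq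
      have hle {d : Fin n → ℕ} (hd : ∀ i, d i < q) : ∑ i, d i * q ^ (i : ℕ) ≤ q ^ n - 1 :=
        Nat.le_sub_one_of_lt (sum_mul_pow_lt hd)
      refine eq_of_sum_mul_pow_eq hdigits hone <|
        eq_of_modEq_of_pos_of_le (sum_mul_pow_pos (by omega) hc) (hle hdigits)
          (sum_mul_pow_pos (by omega) one_ne_zero) (hle hone) ?_
      simpa only [Pi.one_apply, one_mul] using h
    · push Not at hdigits
      obtain ⟨j, hj⟩ := hdigits
      obtain ⟨c', hc', hcarry, hmod⟩ := exists_carry (by omega) hj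
      have hone : c' = 1 := ih _ (by omega) hc' (by omega) (hmod.trans h) rfl
      simp only [hone, Pi.one_apply, Finset.sum_const, Finset.card_univ, Fintype.card_fin,
        smul_eq_mul, mul_one] at hcarry
      omega

theorem sum_pow_modEq_iff_bijective (hq : 2 ≤ q) (p : Fin n → Fin n) :
    ∑ i, q ^ (p i : ℕ) ≡ ∑ i : Fin n, q ^ (i : ℕ) [MOD q ^ n - 1] ↔ p.Bijective := by
  refine ⟨fun h => ?_, fun hp => ?_⟩
  · rcases isEmpty_or_nonempty (Fin n) with hn | ⟨⟨i₀⟩⟩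
    · exact ⟨fun i => hn.elim i, fun i => hn.elim i⟩
    let c : Fin n → ℕ := fun j => (Finset.univ.filter fun i => p i = j).card
    have hsum : ∑ j, c j = n := by
      simpa using (Finset.card_eq_sum_card_fiberwise (f := p) (s := Finset.univ)
        (t := Finset.univ) (by simp)).symm
    have hpow : ∑ j, c j * q ^ (j : ℕ) = ∑ i, q ^ (p i : ℕ) := by
      simp only [← Finset.sum_fiberwise Finset.univ p fun i => q ^ (p i : ℕ)]
      refine Finset.sum_congr rfl fun j _ => ?_
      rw [← smul_eq_mul, ← Finset.sum_const]
      exact Finset.sum_congr rfl fun i hi => by rw [(Finset.mem_filter.1 hi).2]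
    have hc : c = 1 := eq_one_of_sum_mul_pow_modEq hq
      (fun h0 => i₀.pos.ne (by simpa [h0] using hsum)) hsum.le (hpow ▸ h)
    refine Function.Surjective.bijective_of_finite fun j => ?_
    have hj : 0 < c j := by simp [hc]
    obtain ⟨i, hi⟩ := Finset.card_pos.1 hj
    exact ⟨i, (Finset.mem_filter.1 hi).2⟩
  · rw [hp.sum_comp fun i : Fin n => q ^ (i : ℕ)]

end Digits

section PowerSum

variable {K : Type*} [Field K] [Fintype K]

theorem powMonoidHom_units_eq_iff {a b : ℕ} :
    (powMonoidHom a : Kˣ →* Kˣ) = powMonoidHom b ↔ a ≡ b [MOD Fintype.card K - 1] := by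
  classical
  obtain ⟨g, hg⟩ := IsCyclic.exists_generator (α := Kˣ)
  rw [← Fintype.card_units, ← Nat.card_eq_fintype_card,
    ← orderOf_eq_card_of_forall_mem_zpowers hg, ← pow_eq_pow_iff_modEq]
  refine ⟨fun h => DFunLike.congr_fun h g, fun h => MonoidHom.ext fun x => ?_⟩
  obtain ⟨i, rfl⟩ := hg x
  have hcomm (c : ℕ) : (g ^ i) ^ c = (g ^ c) ^ i := by
    rw [← zpow_natCast, zpow_comm, zpow_natCast]
  simp only [powMonoidHom_apply, hcomm, h]

variable [DecidableEq K]

theorem sum_units_pow_div_pow (a b : ℕ) :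
    ∑ x : Kˣ, (x : K) ^ a / (x : K) ^ b =
      if a ≡ b [MOD Fintype.card K - 1] then -1 else 0 := by
  have hsum := sum_hom_units ((Units.coeHom K).comp (powMonoidHom a / powMonoidHom b))
  have hone : (Units.coeHom K).comp (powMonoidHom a / powMonoidHom b) = 1 ↔
      a ≡ b [MOD Fintype.card K - 1] := by
    rw [← powMonoidHom_units_eq_iff (K := K), ← div_eq_one (a := powMonoidHom a),
      ← MonoidHom.cancel_left (g := Units.coeHom K) Units.val_injective, MonoidHom.comp_one]
  have hcard : (Fintype.card Kˣ : K) = -1 := by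
    rw [Fintype.card_units, Nat.cast_sub Fintype.card_pos, FiniteField.cast_card_eq_zero]
    simp
  simpa [hone, hcard, apply_ite] using hsum

theorem sum_units_prod_sum_pow {n q : ℕ} (hq : 2 ≤ q) (hK : Fintype.card K = q ^ n)
    (A : Matrix (Fin n) (Fin n) K) :
    ∑ x : Kˣ, ∏ i, (∑ j, A i j * (x : K) ^ q ^ (j : ℕ)) / (x : K) ^ q ^ (i : ℕ) =
      -A.permanent := by
  have hmonomial (p : Fin n → Fin n) :
      ∑ x : Kˣ, ∏ i, (x : K) ^ q ^ (p i : ℕ) / (x : K) ^ q ^ (i : ℕ) =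
        if p.Bijective then -1 else 0 := by
    simp only [Finset.prod_div_distrib, Finset.prod_pow_eq_pow_sum, sum_units_pow_div_pow, hK,
      sum_pow_modEq_iff_bijective hq]
  calc _ = ∑ x : Kˣ, ∑ p : Fin n → Fin n, (∏ i, A i (p i)) *
        ∏ i, (x : K) ^ q ^ (p i : ℕ) / (x : K) ^ q ^ (i : ℕ) := by
        simp only [Finset.sum_div, Finset.prod_univ_sum, Fintype.piFinset_univ, mul_div_assoc,
          Finset.prod_mul_distrib]
    _ = ∑ p : Fin n → Fin n, if p.Bijective then -∏ i, A i (p i) else 0 := by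
        rw [Finset.sum_comm]
        simp only [← Finset.mul_sum, hmonomial, mul_ite, mul_neg_one, mul_zero]
    _ = ∑ σ : Equiv.Perm (Fin n), -∏ i, A i (σ i) := by
        rw [← Finset.sum_filter, ← Finset.sum_subtype_eq_sum_filter, Finset.subtype_univ]
        exact Fintype.sum_equiv (Equiv.bijectiveEquiv) _ _ fun p => rfl
    _ = -A.permanent := by
        rw [Finset.sum_neg_distrib, ← Matrix.permanent_transpose]
        rfl

end PowerSum

section Permanent

variable {R : Type*} [CommSemiring R]

theorem permanent_succ_column_zero {n : ℕ} (A : Matrix (Fin n.succ) (Fin n.succ) R) :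
    A.permanent = ∑ i, A i 0 * (A.submatrix i.succAbove Fin.succ).permanent := by
  rw [Matrix.permanent, Finset.univ_perm_fin_succ, ← Finset.univ_product_univ]
  simp only [Finset.sum_map, Equiv.coe_toEmbedding, Finset.sum_product, Matrix.permanent,
    Matrix.submatrix_apply, Finset.mul_sum, Fin.prod_univ_succ]
  refine Finset.sum_congr rfl fun i _ => Fin.cases ?_ (fun i => ?_) i
  · simp
  · refine Eq.symm ?_
    rw [← Equiv.sum_comp (Equiv.mulLeft i.cycleRange)]
    simp [Fin.succAbove_cycleRange]

end Permanent

section Directions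

variable {k K : Type*} [Field k] [Field K] [Algebra k K]

/-- The directions determined by the graph of a `k`-linear map `f : K → K`: the slopes of its
nonzero points. They are the affine coordinates of the points of the linear set of the graph. -/
def directions (f : K →ₗ[k] K) : Set K :=
  {m | ∃ x, x ≠ 0 ∧ f x = m * x}

theorem natCast_card_submodule_eq_zero [Finite K] {N : Submodule k K} (hN : N ≠ ⊥) :
    (Nat.card N : K) = 0 := by
  have : Finite k := Finite.of_injective _ (algebraMap k K).injective
  have hrank : Module.finrank k N ≠ 0 := mt Submodule.finrank_eq_zero.1 hN
  have hk : (Nat.card k : k) = 0 := by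
    have := Fintype.ofFinite k
    rw [Nat.card_eq_fintype_card, FiniteField.cast_card_eq_zero]
  rw [Module.natCard_eq_pow_finrank (K := k), Nat.cast_pow, ← map_natCast (algebraMap k K), hk,
    map_zero, zero_pow hrank]

variable [Fintype K] [DecidableEq K]

theorem natCast_card_units_slope_eq {f : K →ₗ[k] K} {m : K} (hm : m ∈ directions f) :
    ((Finset.univ.filter fun x : Kˣ => f x / x = m).card : K) = -1 := by
  obtain ⟨x₀, hx₀, hfx₀⟩ := hm
  let N : Submodule k K := LinearMap.ker (f - LinearMap.mulLeft k m)
  have hmem (x : K) : x ∈ N ↔ f x = m * x := by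
    simp only [N, LinearMap.mem_ker, LinearMap.sub_apply, LinearMap.mulLeft_apply, sub_eq_zero]
  have hN : N ≠ ⊥ := (Submodule.ne_bot_iff _).2 ⟨x₀, (hmem x₀).2 hfx₀, hx₀⟩
  have hcard : Nat.card N = (Finset.univ.filter fun x : Kˣ => f x / x = m).card + 1 := by
    have hset : (N : Set K) = ((insert 0 ((Finset.univ.filter fun x : Kˣ => f x / x = m).map
        ⟨Units.val, Units.val_injective⟩) : Finset K) : Set K) := by
      ext x
      rcases eq_or_ne x 0 with rfl | hx
      · simp
      · obtain ⟨u, rfl⟩ := hx.isUnit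
        simp [hmem, div_eq_iff, Units.val_inj]
    rw [← SetLike.coe_sort_coe, Nat.card_coe_set_eq, hset, Set.ncard_coe_finset,
      Finset.card_insert_of_notMem (by simp), Finset.card_map]
  rw [eq_neg_iff_add_eq_zero, ← Nat.cast_add_one, ← hcard, natCast_card_submodule_eq_zero hN]

theorem sum_units_slope (f : K →ₗ[k] K) (G : K → K) :
    ∑ x : Kˣ, G (f x / x) = -∑ m ∈ (directions f).toFinite.toFinset, G m := by
  have hmaps : ∀ x ∈ (Finset.univ : Finset Kˣ), f x / x ∈ (directions f).toFinite.toFinset :=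
    fun x _ => (Set.Finite.mem_toFinset _).2 ⟨x, x.ne_zero, (div_mul_cancel₀ _ x.ne_zero).symm⟩
  rw [← Finset.sum_fiberwise_of_maps_to hmaps, ← Finset.sum_neg_distrib]
  refine Finset.sum_congr rfl fun m hm => ?_
  rw [Finset.sum_congr rfl fun x hx => by rw [(Finset.mem_filter.1 hx).2], Finset.sum_const,
    nsmul_eq_mul, natCast_card_units_slope_eq ((Set.Finite.mem_toFinset _).1 hm), neg_one_mul]

end Directions

section LinearizedPolynomial

variable {k K : Type*} [Field k] [Field K] [Algebra k K] {n : ℕ}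

/-- The `σ`-linearized polynomial `x ↦ ∑ i, a i * (σ ^ i) x`, as a `k`-linear map. -/
def linPoly (σ : Gal(K/k)) (a : Fin n → K) : K →ₗ[k] K :=
  ∑ i, a i • (σ ^ (i : ℕ)).toLinearMap

theorem linPoly_apply (σ : Gal(K/k)) (a : Fin n → K) (x : K) :
    linPoly σ a x = ∑ i, a i * (σ ^ (i : ℕ)) x := by
  simp [linPoly]

theorem pow_toAlgHom_injective {σ : Gal(K/k)} (hσ : orderOf σ = n) :
    Function.Injective fun i : Fin n => (σ ^ (i : ℕ)).toAlgHom := by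
  intro i j hij
  have hpow : σ ^ (i : ℕ) = σ ^ (j : ℕ) := AlgEquiv.coe_toAlgHom_injective hij
  refine Fin.ext (pow_injOn_Iio_orderOf ?_ ?_ hpow) <;>
    simp only [Set.mem_Iio, hσ, Fin.is_lt]

theorem exists_linPoly_eq [FiniteDimensional k K] {σ : Gal(K/k)}
    (hσ : orderOf σ = n) (hn : Module.finrank k K = n) (f : K →ₗ[k] K) :
    ∃ a : Fin n → K, linPoly σ a = f := by
  have hlin : LinearIndependent K fun i : Fin n => (σ ^ (i : ℕ)).toAlgHom.toLinearMap :=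
    (linearIndependent_algHom_toLinearMap k K K).comp _ (pow_toAlgHom_injective hσ)
  have hcard : Fintype.card (Fin n) = Module.finrank K (K →ₗ[k] K) := by
    rw [Fintype.card_fin, Module.finrank_linearMap_self, hn]
  have hf := Submodule.mem_top (R := K) (x := f)
  rw [← hlin.span_eq_top_of_card_eq_finrank' hcard] at hf
  exact (Submodule.mem_span_range_iff_exists_fun K).1 hf

/-- The Dickson matrix of the linearized polynomial with coefficients `a`: its rows hold the
coefficients of the `σ`-powers of the polynomial, see `pow_apply_linPoly`. -/
def dicksonMatrix (σ : Gal(K/k)) (a : Fin n → K) : Matrix (Fin n) (Fin n) K :=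
  Matrix.of fun i j => (σ ^ (i : ℕ)) (a (j - i))

theorem pow_val_add {σ : Gal(K/k)} (hσ : σ ^ n = 1) (i j : Fin n) :
    σ ^ ((i + j : Fin n) : ℕ) = σ ^ (i : ℕ) * σ ^ (j : ℕ) := by
  rw [Fin.val_add, ← pow_eq_pow_mod _ hσ, pow_add]

theorem pow_apply_linPoly {σ : Gal(K/k)} (hσ : σ ^ n = 1) (a : Fin n → K) (i : Fin n) (x : K) :
    (σ ^ (i : ℕ)) (linPoly σ a x) = ∑ j, dicksonMatrix σ a i j * (σ ^ (j : ℕ)) x := by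
  have : NeZero n := NeZero.of_pos i.pos
  rw [← Equiv.sum_comp (Equiv.addLeft i)]
  simp only [linPoly_apply, map_sum, map_mul, Equiv.coe_addLeft, dicksonMatrix, Matrix.of_apply,
    add_sub_cancel_left, pow_val_add hσ, AlgEquiv.mul_apply]

/-- The permanent of the principal submatrix of `A` with rows and columns in `I`, written as the
permanent of `A` with the other rows replaced by those of the identity matrix. -/
def principalPermanent (A : Matrix (Fin n) (Fin n) K) (I : Finset (Fin n)) : K :=
  Matrix.permanent <| Matrix.of fun i j => if i ∈ I then A i j else (1 : Matrix _ _ K) i j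

end LinearizedPolynomial

section Frobenius

open FiniteField

variable {k K : Type*} [Field k] [Fintype k] [Field K] [Algebra k K] {n : ℕ}

theorem sum_units_prod_pow_slope [Fintype K] [DecidableEq K] (hn : Module.finrank k K = n)
    (a : Fin n → K) (I : Finset (Fin n)) :
    ∑ x : Kˣ, ∏ i ∈ I, (frobeniusAlgEquivOfAlgebraic k K ^ (i : ℕ))
      (linPoly (frobeniusAlgEquivOfAlgebraic k K) a x / x) =
      -principalPermanent (dicksonMatrix (frobeniusAlgEquivOfAlgebraic k K) a) I := by
  set σ := frobeniusAlgEquivOfAlgebraic k K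
  have hσ : σ ^ n = 1 := by
    rw [← hn, ← orderOf_frobeniusAlgEquivOfAlgebraic k K, pow_orderOf_eq_one]
  have hpow (j : ℕ) (x : K) : (σ ^ j) x = x ^ Fintype.card k ^ j := by
    rw [AlgEquiv.coe_pow, coe_frobeniusAlgEquivOfAlgebraic_iterate]
  rw [principalPermanent, ← sum_units_prod_sum_pow Fintype.one_lt_card
    (hn ▸ Module.card_eq_pow_finrank)]
  refine Finset.sum_congr rfl fun x _ => ?_
  rw [← Finset.prod_subset I.subset_univ fun i _ hi => ?_]
  · refine Finset.prod_congr rfl fun i hi => ?_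
    rw [map_div₀, pow_apply_linPoly hσ]
    simp only [Matrix.of_apply, if_pos hi, hpow]
  · simp [hi, Matrix.one_apply]

theorem principalPermanent_eq_of_directions_eq [Finite K] (hn : Module.finrank k K = n)
    {a b : Fin n → K}
    (h : directions (linPoly (frobeniusAlgEquivOfAlgebraic k K) a) =
      directions (linPoly (frobeniusAlgEquivOfAlgebraic k K) b)) (I : Finset (Fin n)) :
    principalPermanent (dicksonMatrix (frobeniusAlgEquivOfAlgebraic k K) a) I =
      principalPermanent (dicksonMatrix (frobeniusAlgEquivOfAlgebraic k K) b) I := by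
  classical
  have := Fintype.ofFinite K
  refine neg_injective ?_
  rw [← sum_units_prod_pow_slope hn, ← sum_units_prod_pow_slope hn]
  simp only [sum_units_slope _ fun m =>
    ∏ i ∈ I, (frobeniusAlgEquivOfAlgebraic k K ^ (i : ℕ)) m, h]

end Frobenius

section QuarticMinors

variable {k K : Type*} [Field k] [Field K] [Algebra k K]

theorem dicksonMatrix_four (σ : Gal(K/k)) (a : Fin 4 → K) :
    dicksonMatrix σ a =
      !![a 0, a 1, a 2, a 3;
        σ (a 3), σ (a 0), σ (a 1), σ (a 2);
        σ (σ (a 2)), σ (σ (a 3)), σ (σ (a 0)), σ (σ (a 1));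
        σ (σ (σ (a 1))), σ (σ (σ (a 2))), σ (σ (σ (a 3))), σ (σ (σ (a 0)))] := by
  ext i j
  fin_cases i <;> fin_cases j <;> rfl

theorem principalPermanent_dicksonMatrix_singleton_zero (σ : Gal(K/k)) (a : Fin 4 → K) :
    principalPermanent (dicksonMatrix σ a) {0} = a 0 := by
  simp [principalPermanent, dicksonMatrix_four, permanent_succ_column_zero, Fin.sum_univ_succ,
    Matrix.one_apply, Fin.succAbove]

theorem principalPermanent_dicksonMatrix_zero_one (σ : Gal(K/k)) (a : Fin 4 → K) :
    principalPermanent (dicksonMatrix σ a) {0, 1} =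
      a 0 * σ (a 0) + σ (a 3) * a 1 := by
  simp [principalPermanent, dicksonMatrix_four, permanent_succ_column_zero, Fin.sum_univ_succ,
    Matrix.one_apply, Fin.succAbove]

theorem principalPermanent_dicksonMatrix_zero_two (σ : Gal(K/k)) (a : Fin 4 → K) :
    principalPermanent (dicksonMatrix σ a) {0, 2} =
      a 0 * σ (σ (a 0)) + σ (σ (a 2)) * a 2 := by
  simp [principalPermanent, dicksonMatrix_four, permanent_succ_column_zero, Fin.sum_univ_succ,
    Matrix.one_apply, Fin.succAbove]

theorem principalPermanent_dicksonMatrix_zero_one_two (σ : Gal(K/k)) (a : Fin 4 → K) :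
    principalPermanent (dicksonMatrix σ a) {0, 1, 2} =
      a 0 * (σ (a 0) * σ (σ (a 0)) + σ (σ (a 3)) * σ (a 1)) +
        (σ (a 3) * (a 1 * σ (σ (a 0)) + σ (σ (a 3)) * a 2) +
          σ (σ (a 2)) * (a 1 * σ (a 1) + σ (a 0) * a 2)) := by
  simp [principalPermanent, dicksonMatrix_four, permanent_succ_column_zero, Fin.sum_univ_succ,
    Matrix.one_apply, Fin.succAbove]

theorem principalPermanent_dicksonMatrix_univ (σ : Gal(K/k)) {a : Fin 4 → K} (h2 : a 2 = 0) :
    principalPermanent (dicksonMatrix σ a) Finset.univ =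
      a 0 * (σ (a 0) * (σ (σ (a 0)) * σ (σ (σ (a 0))) + σ (σ (σ (a 3))) * σ (σ (a 1))) +
          σ (σ (a 3)) * (σ (a 1) * σ (σ (σ (a 0))))) +
        (σ (a 3) * (a 1 * (σ (σ (a 0)) * σ (σ (σ (a 0))) + σ (σ (σ (a 3))) * σ (σ (a 1))) +
            σ (σ (a 3)) * (σ (σ (σ (a 3))) * a 3)) +
          σ (σ (σ (a 1))) * (a 1 * (σ (a 1) * σ (σ (a 1))) +
            (σ (a 0) * (σ (σ (a 0)) * a 3) + σ (σ (a 3)) * (σ (a 1) * a 3)))) := by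
  simp [principalPermanent, dicksonMatrix_four, permanent_succ_column_zero, Fin.sum_univ_succ,
    Fin.succAbove, h2]

end QuarticMinors

theorem eq_or_eq_of_add_eq_of_mul_eq {R : Type*} [CommRing R] [IsDomain R] {x y z w : R}
    (hadd : x + y = z + w) (hmul : x * y = z * w) : (x = z ∧ y = w) ∨ (x = w ∧ y = z) := by
  have h : (x - z) * (x - w) = 0 := by linear_combination x * hadd - hmul
  rcases mul_eq_zero.1 h with h | h
  · exact Or.inl ⟨by linear_combination h, by linear_combination hadd - h⟩
  · exact Or.inr ⟨by linear_combination h, by linear_combination hadd - h⟩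

section CyclicQuartic

variable {k K : Type*} [Field k] [Field K] [Algebra k K] {σ : Gal(K/k)}

theorem apply_four_times (hσ : orderOf σ = 4) (x : K) : σ (σ (σ (σ x))) = x :=
  DFunLike.congr_fun (orderOf_dvd_iff_pow_eq_one.1 hσ.dvd) x

theorem inv_apply_of_orderOf_eq_four (hσ : orderOf σ = 4) (x : K) : σ⁻¹ x = σ (σ (σ x)) := by
  rw [AlgEquiv.aut_inv, AlgEquiv.symm_apply_eq, apply_four_times hσ]

theorem exists_apply_apply_ne (hσ : orderOf σ = 4) : ∃ x : K, σ (σ x) ≠ x := by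
  by_contra! h
  have hdvd : orderOf σ ∣ 2 := orderOf_dvd_of_pow_eq_one (AlgEquiv.ext h)
  rw [hσ] at hdvd
  exact absurd hdvd (by decide)

theorem exists_apply_apply_eq_neg (hσ : orderOf σ = 4) : ∃ t : K, t ≠ 0 ∧ σ (σ t) = -t := by
  obtain ⟨x, hx⟩ := exists_apply_apply_ne hσ
  refine ⟨σ (σ x) - x, sub_ne_zero.2 hx, ?_⟩
  rw [map_sub, map_sub, apply_four_times hσ, neg_sub]

theorem exists_apply_apply_eq_self_apply_ne (hσ : orderOf σ = 4) :
    ∃ r : K, σ (σ r) = r ∧ σ r ≠ r := by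
  obtain ⟨x, hx⟩ := exists_apply_apply_ne hσ
  by_contra! h
  have hadd := h (x + σ (σ x)) (by simp only [map_add, apply_four_times hσ, add_comm])
  have hmul := h (x * σ (σ x)) (by simp only [map_mul, apply_four_times hσ, mul_comm])
  simp only [map_add, map_mul] at hadd hmul
  rcases eq_or_eq_of_add_eq_of_mul_eq hadd hmul with ⟨h₁, -⟩ | ⟨h₁, -⟩
  · exact hx (by rw [h₁, h₁])
  · exact hx (h₁.symm.trans (σ.injective h₁).symm)

theorem exists_mul_eq_mul_apply_apply (hσ : orderOf σ = 4) {b b' : K}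
    (h : b * σ (σ b) = b' * σ (σ b')) : ∃ y : K, y ≠ 0 ∧ b' * y = b * σ (σ y) := by
  by_cases hsum : b + σ (σ b') = 0
  · by_cases hb : b = 0
    · have hb' : b' = 0 := by simpa [hb] using h
      exact ⟨1, one_ne_zero, by rw [hb, hb', zero_mul, zero_mul]⟩
    · have hσsum : σ (σ b) + b' = 0 := by
        rw [← apply_four_times hσ b', ← map_add, ← map_add, hsum, map_zero, map_zero]
      obtain ⟨t, ht, hσt⟩ := exists_apply_apply_eq_neg hσ
      refine ⟨t * b, mul_ne_zero ht hb, ?_⟩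
      rw [map_mul, map_mul, hσt]
      linear_combination b * t * hσsum
  · refine ⟨b + σ (σ b'), hsum, ?_⟩
    rw [map_add, map_add, apply_four_times hσ]
    linear_combination -h

variable [FiniteDimensional k K] [IsGalois k K]

theorem algebraMap_norm_eq_prod_range (hgen : ∀ τ, τ ∈ Subgroup.zpowers σ) (x : K) :
    algebraMap k K (Algebra.norm k x) = ∏ i ∈ Finset.range (orderOf σ), (σ ^ i) x := by
  classical
  rw [Algebra.norm_eq_prod_automorphisms, ← IsCyclic.image_range_orderOf hgen,
    Finset.prod_image]
  simpa only [Finset.coe_range] using pow_injOn_Iio_orderOf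

theorem algebraMap_norm_eq_of_orderOf_eq_four (hgen : ∀ τ, τ ∈ Subgroup.zpowers σ)
    (hσ : orderOf σ = 4) (x : K) :
    algebraMap k K (Algebra.norm k x) = x * σ x * σ (σ x) * σ (σ (σ x)) := by
  rw [algebraMap_norm_eq_prod_range hgen, hσ]
  simp only [Finset.prod_range_succ, Finset.prod_range_zero, one_mul]
  rfl

theorem norm_eq_of_mul_eq (hgen : ∀ τ, τ ∈ Subgroup.zpowers σ) (hσ : orderOf σ = 4)
    {a b a' b' : K} (hb : b ≠ 0) (hbb : b * σ (σ b) = b' * σ (σ b'))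
    (hab : a * σ a * σ (σ b) = a' * σ a' * σ (σ b')) :
    Algebra.norm k a = Algebra.norm k a' := by
  refine (algebraMap k K).injective ?_
  simp only [algebraMap_norm_eq_of_orderOf_eq_four hgen hσ]
  have hbσb : b * σ (σ b) ≠ 0 := mul_ne_zero hb (by simpa using hb)
  have hab' : σ (σ a) * σ (σ (σ a)) * b = σ (σ a') * σ (σ (σ a')) * b' := by
    simpa only [map_mul, apply_four_times hσ] using congrArg (fun z => σ (σ z)) hab
  refine mul_right_cancel₀ hbσb ?_
  calc _ = (a * σ a * σ (σ b)) * (σ (σ a) * σ (σ (σ a)) * b) := by ring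
    _ = _ := by rw [hab, hab', hbb]; ring

end CyclicQuartic

section HilbertNinety

variable {k K : Type} [Field k] [Field K] [Algebra k K] [FiniteDimensional k K] [IsGalois k K]
  {σ : Gal(K/k)}

theorem exists_mul_eq_mul_apply_of_norm_eq (hgen : ∀ τ, τ ∈ Subgroup.zpowers σ) {a a' : K}
    (h : Algebra.norm k a = Algebra.norm k a') : ∃ y : K, y ≠ 0 ∧ a' * y = a * σ y := by
  by_cases ha' : a' = 0
  · have ha : a = 0 := Algebra.norm_eq_zero_iff.1 (by rw [h, ha', Algebra.norm_zero])
    exact ⟨1, one_ne_zero, by rw [ha, ha', zero_mul, zero_mul]⟩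
  · have hdiv : Algebra.norm k (a / a') = 1 := by
      rw [div_eq_mul_inv, map_mul, Algebra.norm_inv, h,
        mul_inv_cancel₀ (Algebra.norm_ne_zero_iff.2 ha')]
    have : IsCyclic Gal(K/k) := ⟨σ, hgen⟩
    obtain ⟨y, hy⟩ := groupCohomology.exists_div_of_norm_eq_one hgen hdiv
    have hσy : σ (y : K) ≠ 0 := by simp
    exact ⟨y, y.ne_zero, by rwa [div_eq_div_iff hσy ha', mul_comm] at hy⟩

theorem exists_mul_eq_mul_apply_and (hgen : ∀ τ, τ ∈ Subgroup.zpowers σ) (hσ : orderOf σ = 4)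
    {a b a' b' : K} (hN : Algebra.norm k a = Algebra.norm k a')
    (hbb : b * σ (σ b) = b' * σ (σ b')) (hab : a * σ a * σ (σ b) = a' * σ a' * σ (σ b')) :
    ∃ y : K, y ≠ 0 ∧ a' * y = a * σ y ∧ b' * y = b * σ (σ y) := by
  by_cases ha : a = 0
  · have ha' : a' = 0 := Algebra.norm_eq_zero_iff.1 (by rw [← hN, ha, Algebra.norm_zero])
    obtain ⟨y, hy, hby⟩ := exists_mul_eq_mul_apply_apply hσ hbb
    exact ⟨y, hy, by rw [ha, ha', zero_mul, zero_mul], hby⟩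
  · obtain ⟨y, hy, hay⟩ := exists_mul_eq_mul_apply_of_norm_eq hgen hN
    refine ⟨y, hy, hay, ?_⟩
    have hσay : σ a' * σ y = σ a * σ (σ y) := by rw [← map_mul, hay, map_mul]
    have hσby : σ (σ b) * y = σ (σ b') * σ (σ y) := by
      have haσa : a * σ a * σ y ≠ 0 := by simp [ha, hy]
      refine mul_left_cancel₀ haσa ?_
      linear_combination y * σ y * hab + σ (σ b') * (σ a' * σ y * hay + a * σ y * hσay)
    have := congrArg (fun z => σ (σ z)) hσby
    simp only [map_mul, apply_four_times hσ] at this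
    exact this.symm

end HilbertNinety

section ScalarConj

variable {k K : Type*} [Field k] [Field K] [Algebra k K] {n : ℕ}

/-- `b` is the coefficient vector of the conjugate of `linPoly σ a` by multiplication by a nonzero
scalar, see `IsScalarConj.exists_linPoly_eq`. -/
def IsScalarConj (σ : Gal(K/k)) (a b : Fin n → K) : Prop :=
  ∃ y ≠ 0, ∀ i, b i * y = a i * (σ ^ (i : ℕ)) y

theorem IsScalarConj.exists_linPoly_eq {σ : Gal(K/k)} {a b : Fin n → K}
    (h : IsScalarConj σ a b) : ∃ y ≠ 0, ∀ x, y * linPoly σ b x = linPoly σ a (y * x) := by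
  obtain ⟨y, hy, hab⟩ := h
  refine ⟨y, hy, fun x => ?_⟩
  rw [linPoly_apply, linPoly_apply, Finset.mul_sum]
  refine Finset.sum_congr rfl fun i _ => ?_
  rw [map_mul]
  linear_combination (σ ^ (i : ℕ)) x * hab i

/-- The coefficient vector of the adjoint of `linPoly σ a` for the trace form
`(x, y) ↦ Tr (x * y)`, when `σ ^ n = 1`. -/
def adjointCoeffs (σ : Gal(K/k)) (a : Fin n → K) (i : Fin n) : K :=
  (σ ^ (i : ℕ)) (a (-i))

theorem adjointCoeffs_four (σ : Gal(K/k)) (a : Fin 4 → K) :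
    adjointCoeffs σ a = ![a 0, σ (a 3), σ (σ (a 2)), σ (σ (σ (a 1)))] := by
  ext i
  fin_cases i <;> rfl

end ScalarConj

section QuarticConj

variable {k K : Type*} [Field k] [Field K] [Algebra k K] {σ : Gal(K/k)} {a b : Fin 4 → K}

theorem prod_add_prod_eq_of_principalPermanent_eq
    (h : ∀ I, principalPermanent (dicksonMatrix σ a) I = principalPermanent (dicksonMatrix σ b) I)
    (h0 : a 0 = b 0) (h13 : σ (a 3) * a 1 = σ (b 3) * b 1)
    (h22 : σ (σ (a 2)) * a 2 = σ (σ (b 2)) * b 2) :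
    a 1 * σ (a 1) * σ (σ (a 2)) + σ (a 3) * σ (σ (a 3)) * a 2 =
      b 1 * σ (b 1) * σ (σ (b 2)) + σ (b 3) * σ (σ (b 3)) * b 2 := by
  have h012 := h {0, 1, 2}
  have hσ13 := congrArg σ h13
  simp only [principalPermanent_dicksonMatrix_zero_one_two, h0, map_mul] at h012 hσ13
  linear_combination h012 - b 0 * hσ13 - σ (σ (b 0)) * h13 - σ (b 0) * h22

variable [FiniteDimensional k K] [IsGalois k K]

theorem norm_add_norm_eq_of_principalPermanent_eq (hgen : ∀ τ, τ ∈ Subgroup.zpowers σ)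
    (hσ : orderOf σ = 4)
    (h : ∀ I, principalPermanent (dicksonMatrix σ a) I = principalPermanent (dicksonMatrix σ b) I)
    (h0 : a 0 = b 0) (h13 : σ (a 3) * a 1 = σ (b 3) * b 1) (ha2 : a 2 = 0) (hb2 : b 2 = 0) :
    Algebra.norm k (a 1) + Algebra.norm k (a 3) = Algebra.norm k (b 1) + Algebra.norm k (b 3) := by
  refine (algebraMap k K).injective ?_
  have huniv := h Finset.univ
  have hσ13 := congrArg σ h13
  have hσσ13 := congrArg σ hσ13
  have hσσσ13 := congrArg σ hσσ13
  simp only [principalPermanent_dicksonMatrix_univ σ ha2,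
    principalPermanent_dicksonMatrix_univ σ hb2, h0, map_mul, map_add,
    algebraMap_norm_eq_of_orderOf_eq_four hgen hσ, apply_four_times hσ]
    at huniv hσ13 hσσ13 hσσσ13 ⊢
  linear_combination huniv - (σ (σ (b 0)) * σ (σ (σ (b 0))) + σ (σ (σ (a 3))) * σ (σ (a 1))) * h13 -
    (b 0 * σ (σ (σ (b 0))) + a 3 * σ (σ (σ (a 1)))) * hσ13 -
    (b 0 * σ (b 0) + σ (b 3) * b 1) * hσσ13 -
    (σ (b 0) * σ (σ (b 0)) + σ (σ (b 3)) * σ (b 1)) * hσσσ13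

theorem products_eq_or_swapped (hgen : ∀ τ, τ ∈ Subgroup.zpowers σ) (hσ : orderOf σ = 4)
    (h : ∀ I, principalPermanent (dicksonMatrix σ a) I = principalPermanent (dicksonMatrix σ b) I)
    (h0 : a 0 = b 0) (h13 : σ (a 3) * a 1 = σ (b 3) * b 1)
    (h22 : σ (σ (a 2)) * a 2 = σ (σ (b 2)) * b 2) :
    (a 1 * σ (a 1) * σ (σ (a 2)) = b 1 * σ (b 1) * σ (σ (b 2)) ∧
      σ (a 3) * σ (σ (a 3)) * a 2 = σ (b 3) * σ (σ (b 3)) * b 2 ∧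
      Algebra.norm k (a 1) = Algebra.norm k (b 1) ∧ Algebra.norm k (a 3) = Algebra.norm k (b 3)) ∨
    (a 1 * σ (a 1) * σ (σ (a 2)) = σ (b 3) * σ (σ (b 3)) * b 2 ∧
      σ (a 3) * σ (σ (a 3)) * a 2 = b 1 * σ (b 1) * σ (σ (b 2)) ∧
      Algebra.norm k (a 1) = Algebra.norm k (b 3) ∧
      Algebra.norm k (a 3) = Algebra.norm k (b 1)) := by
  by_cases ha2 : a 2 = 0
  · have hb2 : b 2 = 0 := by simpa [ha2] using h22.symm
    have hN := congrArg (Algebra.norm k) h13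
    simp only [map_mul, Algebra.norm_eq_of_algEquiv] at hN
    rw [mul_comm, mul_comm (Algebra.norm k (b 3))] at hN
    simpa [ha2, hb2] using eq_or_eq_of_add_eq_of_mul_eq
      (norm_add_norm_eq_of_principalPermanent_eq hgen hσ h h0 h13 ha2 hb2) hN
  · have hσ13 : σ (σ (a 3)) * σ (a 1) = σ (σ (b 3)) * σ (b 1) := by
      rw [← map_mul, h13, map_mul]
    have hmul : (a 1 * σ (a 1) * σ (σ (a 2))) * (σ (a 3) * σ (σ (a 3)) * a 2) =
        (b 1 * σ (b 1) * σ (σ (b 2))) * (σ (b 3) * σ (σ (b 3)) * b 2) := by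
      calc _ = (σ (a 3) * a 1) * (σ (σ (a 3)) * σ (a 1)) * (σ (σ (a 2)) * a 2) := by ring
        _ = _ := by rw [h13, hσ13, h22]; ring
    have hσσa2 : σ (σ (a 2)) ≠ 0 := by simpa using ha2
    have hNσ3 (c : Fin 4 → K) : Algebra.norm k (σ (c 3)) = Algebra.norm k (c 3) :=
      Algebra.norm_eq_of_algEquiv σ (c 3)
    refine (eq_or_eq_of_add_eq_of_mul_eq
      (prod_add_prod_eq_of_principalPermanent_eq h h0 h13 h22) hmul).imp ?_ ?_ <;>
      refine fun ⟨h112, h332⟩ => ⟨h112, h332, ?_, ?_⟩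
    · exact norm_eq_of_mul_eq hgen hσ ha2 (by linear_combination h22) h112
    · rw [← hNσ3, ← hNσ3]
      exact norm_eq_of_mul_eq hgen hσ hσσa2 (b' := σ (σ (b 2)))
        (by simpa only [apply_four_times hσ])
        (by simpa only [apply_four_times hσ])
    · rw [← hNσ3]
      exact norm_eq_of_mul_eq hgen hσ ha2 (b' := σ (σ (b 2)))
        (by rw [apply_four_times hσ, ← h22, mul_comm]) (by rwa [apply_four_times hσ])
    · rw [← hNσ3]
      exact norm_eq_of_mul_eq hgen hσ hσσa2 (b' := b 2)
        (by rw [apply_four_times hσ, h22, mul_comm]) (by rwa [apply_four_times hσ])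

end QuarticConj

section QuarticClassification

variable {k K : Type} [Field k] [Field K] [Algebra k K] [FiniteDimensional k K] [IsGalois k K]
  {σ : Gal(K/k)} {a b : Fin 4 → K}

theorem isScalarConj_of_products_eq (hgen : ∀ τ, τ ∈ Subgroup.zpowers σ) (hσ : orderOf σ = 4)
    (h0 : a 0 = b 0) (h13 : σ (a 3) * a 1 = σ (b 3) * b 1)
    (h22 : σ (σ (a 2)) * a 2 = σ (σ (b 2)) * b 2)
    (h112 : a 1 * σ (a 1) * σ (σ (a 2)) = b 1 * σ (b 1) * σ (σ (b 2)))
    (h332 : σ (a 3) * σ (σ (a 3)) * a 2 = σ (b 3) * σ (σ (b 3)) * b 2)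
    (hN1 : Algebra.norm k (a 1) = Algebra.norm k (b 1))
    (hN3 : Algebra.norm k (a 3) = Algebra.norm k (b 3)) : IsScalarConj σ a b := by
  suffices ∃ y ≠ 0, b 1 * y = a 1 * σ y ∧ b 2 * y = a 2 * σ (σ y) ∧
      b 3 * y = a 3 * σ (σ (σ y)) by
    obtain ⟨y, hy, h1, h2, h3⟩ := this
    refine ⟨y, hy, fun i => ?_⟩
    fin_cases i
    exacts [h0 ▸ rfl, h1, h2, h3]
  by_cases ha1 : a 1 = 0
  · have hb1 : b 1 = 0 := Algebra.norm_eq_zero_iff.1 (by rw [← hN1, ha1, Algebra.norm_zero])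
    have hgen' : ∀ τ, τ ∈ Subgroup.zpowers σ⁻¹ := by simpa only [Subgroup.zpowers_inv] using hgen
    have hσ' : orderOf σ⁻¹ = 4 := by rw [orderOf_inv, hσ]
    obtain ⟨y, hy, h3, h2⟩ := exists_mul_eq_mul_apply_and hgen' hσ' hN3 (b := a 2) (b' := b 2)
      (by simp only [inv_apply_of_orderOf_eq_four hσ, apply_four_times hσ]
          linear_combination h22)
      (by simp only [inv_apply_of_orderOf_eq_four hσ, apply_four_times hσ]
          have := congrArg (fun z => σ (σ z)) h332
          simp only [map_mul, apply_four_times hσ] at this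
          linear_combination this)
    simp only [inv_apply_of_orderOf_eq_four hσ, apply_four_times hσ] at h2 h3
    exact ⟨y, hy, by rw [ha1, hb1, zero_mul, zero_mul], h2, h3⟩
  · obtain ⟨y, hy, h1, h2⟩ := exists_mul_eq_mul_apply_and hgen hσ hN1 (b := a 2) (b' := b 2)
      (by linear_combination h22) h112
    refine ⟨y, hy, h1, h2, ?_⟩
    have hσ3 : σ (b 3) * σ y = σ (a 3) * y := by
      have ha1y : a 1 * σ y ≠ 0 := mul_ne_zero ha1 (by simpa using hy)
      refine mul_left_cancel₀ ha1y ?_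
      linear_combination (-σ (b 3) * σ y) * h1 - y * σ y * h13
    simpa only [map_mul, apply_four_times hσ] using congrArg (fun z => σ (σ (σ z))) hσ3

theorem isScalarConj_or_isScalarConj_adjointCoeffs (hgen : ∀ τ, τ ∈ Subgroup.zpowers σ)
    (hσ : orderOf σ = 4)
    (h : ∀ I, principalPermanent (dicksonMatrix σ a) I = principalPermanent (dicksonMatrix σ b) I) :
    IsScalarConj σ a b ∨ IsScalarConj σ (adjointCoeffs σ a) b := by
  have h0 : a 0 = b 0 := by
    simpa only [principalPermanent_dicksonMatrix_singleton_zero] using h {0}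
  have h13 : σ (a 3) * a 1 = σ (b 3) * b 1 := by
    simpa only [principalPermanent_dicksonMatrix_zero_one, h0, add_right_inj] using h {0, 1}
  have h22 : σ (σ (a 2)) * a 2 = σ (σ (b 2)) * b 2 := by
    simpa only [principalPermanent_dicksonMatrix_zero_two, h0, add_right_inj] using h {0, 2}
  rcases products_eq_or_swapped hgen hσ h h0 h13 h22 with
    ⟨h112, h332, hN1, hN3⟩ | ⟨h112, h332, hN1, hN3⟩
  · exact Or.inl (isScalarConj_of_products_eq hgen hσ h0 h13 h22 h112 h332 hN1 hN3)
  · right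
    apply isScalarConj_of_products_eq hgen hσ <;>
      simp only [adjointCoeffs_four, Matrix.cons_val, apply_four_times hσ,
        Algebra.norm_eq_of_algEquiv]
    · exact h0
    · rw [mul_comm, h13]
    · rw [mul_comm, h22]
    · exact h332
    · rw [← h112]
    · exact hN3
    · exact hN1

end QuarticClassification

section QuarticAdjoint

variable {k K : Type*} [Field k] [Field K] [Algebra k K] {σ : Gal(K/k)}

theorem linPoly_four_apply (σ : Gal(K/k)) (a : Fin 4 → K) (x : K) :
    linPoly σ a x = a 0 * x + a 1 * σ x + a 2 * σ (σ x) + a 3 * σ (σ (σ x)) := by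
  rw [linPoly_apply, Fin.sum_univ_four]
  rfl

theorem linPoly_adjointCoeffs_apply (hσ : orderOf σ = 4) {a : Fin 4 → K} {u t : K}
    (ht : σ (σ t) = -t)
    (hu : u * σ (σ (a 1)) - σ (a 3) * σ (σ (σ u)) =
      σ (σ (a 2)) * a 3 * t + σ (σ (σ (a 1))) * σ (a 2) * σ t) (x : K) :
    linPoly σ (adjointCoeffs σ a)
        ((σ (σ u) + t * σ (σ (a 0))) * σ (σ x) + -t * σ (σ (linPoly σ a x))) =
      (a 2 * σ (σ (a 2)) * t + σ (a 1 * σ (σ (a 1)) - a 3 * σ (σ (a 3))) * σ t -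
          u * σ (σ (a 0)) + a 0 * (σ (σ u) + t * σ (σ (a 0)))) * σ (σ x) +
        (u - a 0 * t) * σ (σ (linPoly σ a x)) := by
  have hσu := congrArg σ hu
  simp only [linPoly_four_apply, adjointCoeffs_four, Matrix.cons_val, map_add, map_sub, map_mul,
    map_neg, apply_four_times hσ, ht] at hσu ⊢
  linear_combination (-σ (σ (σ x))) * hu + σ x * hσu

theorem eq_zero_of_forms_eq_zero {B D t r u v : K} (ht : t ≠ 0) (hr : σ (σ r) = r)
    (hσr : σ r ≠ r) (h₁ : (B * t + D * σ t) * t + u * σ (σ u) = 0)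
    (h₂ : (B * (r * t) + D * σ (r * t)) * (r * t) + v * σ (σ v) = 0)
    (h₁₂ : (B * (t + r * t) + D * σ (t + r * t)) * (t + r * t) + (u + v) * σ (σ (u + v)) = 0) :
    D = 0 := by
  have hr0 : r ≠ 0 := by
    rintro rfl
    exact hσr (map_zero σ)
  have hv : v = r * u := by
    have hsub : (v - r * u) * σ (σ (v - r * u)) = 0 := by
      simp only [map_add, map_sub, map_mul, hr] at h₁ h₂ h₁₂ ⊢
      linear_combination (1 + r) * h₂ + r * (r + 1) * h₁ - r * h₁₂
    simpa only [mul_eq_zero, map_eq_zero, or_self, sub_eq_zero] using hsub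
  have hD : D * ((σ r - r) * (r * σ t * t)) = 0 := by
    simp only [hv, map_mul, hr] at h₂
    linear_combination h₂ - r * r * h₁
  simpa [ht, hr0, sub_eq_zero, hσr] using hD

variable [FiniteDimensional k K]

theorem exists_mul_sub_mul_eq (σ : Gal(K/k)) {a c : K}
    (hN : Algebra.norm k a ≠ Algebra.norm k c) (z : K) :
    ∃ u, u * σ (σ a) - σ c * σ (σ (σ u)) = z := by
  let T : K →ₗ[k] K := LinearMap.mulRight k (σ (σ a)) -
    LinearMap.mulLeft k (σ c) ∘ₗ (σ ^ 3).toLinearMap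
  have hT (u : K) : T u = u * σ (σ a) - σ c * σ (σ (σ u)) := rfl
  suffices Function.Injective T from LinearMap.injective_iff_surjective.1 this z
  refine (injective_iff_map_eq_zero T).2 fun u hu => ?_
  by_contra hu0
  have hnorm := congrArg (Algebra.norm k) (sub_eq_zero.1 ((hT u).symm.trans hu))
  simp only [map_mul, Algebra.norm_eq_of_algEquiv] at hnorm
  refine hN (mul_left_cancel₀ (Algebra.norm_ne_zero_iff.2 hu0) ?_)
  rw [hnorm, mul_comm]

variable [IsGalois k K]

theorem norm_eq_of_mul_apply_apply_eq (hgen : ∀ τ, τ ∈ Subgroup.zpowers σ) (hσ : orderOf σ = 4)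
    {a c : K} (h : a * σ (σ a) = c * σ (σ c)) : Algebra.norm k a = Algebra.norm k c := by
  refine (algebraMap k K).injective ?_
  have hσh : σ a * σ (σ (σ a)) = σ c * σ (σ (σ c)) := by
    simpa only [map_mul] using congrArg σ h
  simp only [algebraMap_norm_eq_of_orderOf_eq_four hgen hσ]
  linear_combination σ a * σ (σ (σ a)) * h + c * σ (σ c) * hσh

end QuarticAdjoint

-- The parameters of the semilinear map from `linPoly_adjointCoeffs_apply`; the last condition is
-- its invertibility. If `u` is not free at `t = 0`, then it is determined by `t`, and the failure
-- of invertibility at `t`, `r * t` and `t + r * t` forces the norms of `a` and `c` to agree.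
theorem exists_adjoint_parameters {k K : Type} [Field k] [Field K] [Algebra k K]
    [FiniteDimensional k K] [IsGalois k K] {σ : Gal(K/k)} (hgen : ∀ τ, τ ∈ Subgroup.zpowers σ)
    (hσ : orderOf σ = 4) (a b c : K) :
    ∃ u t, σ (σ t) = -t ∧
      u * σ (σ a) - σ c * σ (σ (σ u)) = σ (σ b) * c * t + σ (σ (σ a)) * σ b * σ t ∧
      (b * σ (σ b) * t + σ (a * σ (σ a) - c * σ (σ c)) * σ t) * t + u * σ (σ u) ≠ 0 := by
  by_cases hN : Algebra.norm k a = Algebra.norm k c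
  · have hgen' : ∀ τ, τ ∈ Subgroup.zpowers σ⁻¹ := by simpa only [Subgroup.zpowers_inv] using hgen
    obtain ⟨u, hu, hau⟩ := exists_mul_eq_mul_apply_of_norm_eq hgen' (a := σ c) (a' := σ (σ a))
      (by simp only [Algebra.norm_eq_of_algEquiv, hN])
    rw [inv_apply_of_orderOf_eq_four hσ] at hau
    refine ⟨u, 0, by simp, ?_, by simpa using hu⟩
    simp only [map_zero, mul_zero, add_zero]
    linear_combination hau
  · obtain ⟨t, ht, hσt⟩ := exists_apply_apply_eq_neg hσ
    obtain ⟨r, hr, hσr⟩ := exists_apply_apply_eq_self_apply_ne hσ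
    have hσrt : σ (σ (r * t)) = -(r * t) := by rw [map_mul, map_mul, hr, hσt, mul_neg]
    obtain ⟨u, hu⟩ := exists_mul_sub_mul_eq σ hN (σ (σ b) * c * t + σ (σ (σ a)) * σ b * σ t)
    obtain ⟨v, hv⟩ := exists_mul_sub_mul_eq σ hN
      (σ (σ b) * c * (r * t) + σ (σ (σ a)) * σ b * σ (r * t))
    by_contra! hform
    have hD := eq_zero_of_forms_eq_zero ht hr hσr (hform u t hσt hu) (hform v (r * t) hσrt hv)
      (hform (u + v) (t + r * t) (by rw [map_add, map_add, hσt, hσrt, neg_add])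
        (by simp only [map_add]; linear_combination hu + hv))
    rw [map_eq_zero, sub_eq_zero] at hD
    exact hN (norm_eq_of_mul_apply_apply_eq hgen hσ hD)

section Semilinear

variable {F : Type*} [Field F]

/-- `S` and `T` are in the same orbit of the group of invertible semilinear maps of the plane
`F × F`. -/
def SemilinearEquivalent (S T : Set (F × F)) : Prop :=
  ∃ (σ : F ≃+* F) (φ : (F × F) ≃+ (F × F)),
    (∀ (c : F) (w : F × F), φ (c • w) = σ c • φ w) ∧ φ '' S = T

theorem SemilinearEquivalent.symm {S T : Set (F × F)} (h : SemilinearEquivalent S T) :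
    SemilinearEquivalent T S := by
  obtain ⟨σ, φ, hφ, rfl⟩ := h
  refine ⟨σ.symm, φ.symm, fun c w => ?_, ?_⟩
  · rw [AddEquiv.symm_apply_eq, hφ, RingEquiv.apply_symm_apply, AddEquiv.apply_symm_apply]
  · rw [← Set.image_comp, AddEquiv.symm_comp_self, Set.image_id]

theorem SemilinearEquivalent.trans {S T R : Set (F × F)} (h : SemilinearEquivalent S T)
    (h' : SemilinearEquivalent T R) : SemilinearEquivalent S R := by
  obtain ⟨σ, φ, hφ, rfl⟩ := h
  obtain ⟨τ, ψ, hψ, rfl⟩ := h'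
  refine ⟨σ.trans τ, φ.trans ψ, fun c w => ?_, ?_⟩
  · rw [AddEquiv.trans_apply, hφ, hψ, RingEquiv.trans_apply, AddEquiv.trans_apply]
  · rw [AddEquiv.coe_trans, Set.image_comp]

theorem SemilinearEquivalent.image_linearEquiv (θ : (F × F) ≃ₗ[F] F × F) (S : Set (F × F)) :
    SemilinearEquivalent S (θ '' S) :=
  ⟨.refl F, θ.toAddEquiv, map_smul θ, rfl⟩

theorem SemilinearEquivalent.of_mapsTo [Finite F] (τ : F ≃+* F) {α β γ δ : F}
    (hdet : α * δ - β * γ ≠ 0) {S T : Set (F × F)} (hcard : T.ncard ≤ S.ncard)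
    (hST : Set.MapsTo (fun w => (α * τ w.1 + β * τ w.2, γ * τ w.1 + δ * τ w.2)) S T) :
    SemilinearEquivalent S T := by
  let f : F × F →+ F × F := AddMonoidHom.mk'
    (fun w => (α * τ w.1 + β * τ w.2, γ * τ w.1 + δ * τ w.2)) fun v w => by
      ext <;> simp only [Prod.fst_add, Prod.snd_add, map_add] <;> ring
  have hf : Function.Bijective f := by
    rw [← Finite.injective_iff_bijective, injective_iff_map_eq_zero]
    rintro ⟨x, y⟩ h
    obtain ⟨h₁, h₂⟩ := Prod.mk_eq_zero.1 h
    have hx : (α * δ - β * γ) * τ x = 0 := by linear_combination δ * h₁ - β * h₂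
    have hy : (α * δ - β * γ) * τ y = 0 := by linear_combination α * h₂ - γ * h₁
    simpa [hdet] using And.intro hx hy
  refine ⟨τ, AddEquiv.ofBijective f hf, fun c w => ?_, ?_⟩
  · ext <;> simp [f] <;> ring
  · exact Set.eq_of_subset_of_ncard_le hST.image_subset
      (by rwa [Set.ncard_image_of_injective _ (AddEquiv.injective _)])

variable {k : Type*} [Field k] [Algebra k F]

theorem SemilinearEquivalent.graph_of_map_eq [Finite F] (τ : F ≃+* F) {α β γ δ : F}
    (hdet : α * δ - β * γ ≠ 0) {f g : F →ₗ[k] F}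
    (h : ∀ x, g (α * τ x + β * τ (f x)) = γ * τ x + δ * τ (f x)) :
    SemilinearEquivalent (f.graph : Set (F × F)) g.graph := by
  have hncard (f : F →ₗ[k] F) : (f.graph : Set (F × F)).ncard = Nat.card F :=
    Nat.card_congr ⟨fun w => w.1.1, fun x => ⟨(x, f x), rfl⟩,
      fun w => Subtype.ext (Prod.ext rfl w.2.symm), fun _ => rfl⟩
  refine .of_mapsTo τ hdet (by rw [hncard, hncard]) ?_
  rintro ⟨x, _⟩ (rfl : _ = f x)
  exact (h x).symm

theorem IsScalarConj.semilinearEquivalent_graph [Finite F] {n : ℕ} {σ : Gal(F/k)}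
    {a b : Fin n → F} (h : IsScalarConj σ a b) :
    SemilinearEquivalent ((linPoly σ a).graph : Set (F × F)) (linPoly σ b).graph := by
  obtain ⟨y, hy, hab⟩ := h.exists_linPoly_eq
  refine .symm <| .graph_of_map_eq (.refl F) (α := y) (β := 0) (γ := 0) (δ := y)
    (by simpa using hy) fun x => ?_
  simpa using (hab x).symm

end Semilinear

section SemilinearAdjoint

variable {k F : Type} [Field k] [Field F] [Finite F] [Algebra k F]

theorem semilinearEquivalent_graph_adjointCoeffs {σ : Gal(F/k)}
    (hgen : ∀ τ, τ ∈ Subgroup.zpowers σ) (hσ : orderOf σ = 4) (a : Fin 4 → F) :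
    SemilinearEquivalent ((linPoly σ a).graph : Set (F × F))
      (linPoly σ (adjointCoeffs σ a)).graph := by
  obtain ⟨u, t, ht, hu, hdet⟩ := exists_adjoint_parameters hgen hσ (a 1) (a 2) (a 3)
  refine .graph_of_map_eq (σ ^ 2 : Gal(F/k)).toRingEquiv (fun h => hdet ?_)
    (linPoly_adjointCoeffs_apply hσ ht hu)
  linear_combination h

end SemilinearAdjoint

section LinSet

variable {k F : Type} [Field k] [Field F] [Algebra k F]

theorem span_singleton_mem_linSet_iff {S : Set (F × F)} {w : F × F} (hw : w ≠ 0) :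
    Submodule.span F {w} ∈ linSet F S ↔ ∃ c : F, c ≠ 0 ∧ c • w ∈ S := by
  constructor
  · rintro ⟨u, hu, -, hspan⟩
    obtain ⟨c, rfl⟩ := Submodule.span_singleton_eq_span_singleton.1 hspan
    exact ⟨c, c.ne_zero, hu⟩
  · rintro ⟨c, hc, hcw⟩
    exact ⟨c • w, hcw, smul_ne_zero hc hw, (Submodule.span_singleton_smul_eq hc.isUnit w).symm⟩

theorem span_singleton_apply_mem_linSet_image_iff (θ : (F × F) ≃ₗ[F] F × F) {S : Set (F × F)}
    {w : F × F} (hw : w ≠ 0) :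
    Submodule.span F {θ w} ∈ linSet F (θ '' S) ↔ Submodule.span F {w} ∈ linSet F S := by
  rw [span_singleton_mem_linSet_iff hw,
    span_singleton_mem_linSet_iff (by rwa [ne_eq, LinearEquiv.map_eq_zero_iff])]
  simp only [← map_smul, θ.injective.mem_set_image]

theorem mem_directions_iff {f : F →ₗ[k] F} {m : F} :
    m ∈ directions f ↔ Submodule.span F {((1 : F), m)} ∈ linSet F (f.graph : Set (F × F)) := by
  rw [span_singleton_mem_linSet_iff (by simp)]
  simp [directions, mul_comm m, eq_comm]

variable {U V : Submodule k (F × F)}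

theorem exists_eq_graph [FiniteDimensional k F]
    (hU : Module.finrank k U = Module.finrank k F)
    (hvert : Submodule.span F {((0 : F), (1 : F))} ∉ linSet F (U : Set (F × F))) :
    ∃ f : F →ₗ[k] F, U = f.graph := by
  have hfst : Function.Injective (LinearMap.fst k F F ∘ₗ U.subtype) := by
    refine (injective_iff_map_eq_zero _).2 ?_
    rintro ⟨u, hu⟩ (hu₁ : u.1 = 0)
    by_contra hu0
    refine hvert ((span_singleton_mem_linSet_iff (by simp)).2 ⟨u.2, fun hu₂ => ?_, ?_⟩)
    · exact hu0 (Subtype.ext (Prod.ext hu₁ hu₂))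
    · have hu₂ : u.2 • ((0 : F), (1 : F)) = u := by ext <;> simp [hu₁]
      rwa [hu₂]
  refine Submodule.exists_eq_graph ⟨hfst, ?_⟩
  exact (LinearMap.injective_iff_surjective_of_finrank_eq_finrank hU).1 hfst

variable [Finite F]

theorem exists_span_singleton_notMem_linSet (hU : Module.finrank k U = Module.finrank k F) :
    ∃ m, Submodule.span F {((1 : F), m)} ∉ linSet F (U : Set (F × F)) := by
  by_contra! h
  have hne (m : F) : ((1 : F), m) ≠ 0 := by simp
  simp only [span_singleton_mem_linSet_iff (hne _), Prod.smul_mk, smul_eq_mul, mul_one] at h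
  choose c hc hcU using h
  have hinj : Function.Injective fun m => (⟨(c m, c m * m), hcU m⟩ : U) := fun m n hmn => by
    obtain ⟨h₁, h₂⟩ : c m = c n ∧ c m * m = c n * n := Prod.mk.inj (congrArg Subtype.val hmn)
    rw [h₁] at h₂
    exact mul_left_cancel₀ (hc n) h₂
  have hcard : Nat.card U = Nat.card F :=
    Nat.card_congr (LinearEquiv.ofFinrankEq U F hU).toEquiv
  obtain ⟨m, hm⟩ := (hinj.bijective_of_nat_card_le hcard.le).surjective 0
  exact hc m (congrArg (fun u : U => u.1.1) hm)

theorem exists_graphs_of_linSet_eq (hU : Module.finrank k U = Module.finrank k F)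
    (hV : Module.finrank k V = Module.finrank k F)
    (hUV : linSet F (U : Set (F × F)) = linSet F (V : Set (F × F))) :
    ∃ f g : F →ₗ[k] F, SemilinearEquivalent (U : Set (F × F)) f.graph ∧
      SemilinearEquivalent (V : Set (F × F)) g.graph ∧ directions f = directions g := by
  obtain ⟨m, hm⟩ := exists_span_singleton_notMem_linSet hU
  let θ : (F × F) ≃ₗ[F] F × F :=
    (LinearEquiv.refl F F).skewProd (LinearEquiv.refl F F) (LinearMap.mulLeft F (-m)) ≪≫ₗ
      LinearEquiv.prodComm F F F
  have hθ : θ (1, m) = (0, 1) := by simp [θ]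
  have hgraph {W : Submodule k (F × F)} (hW : Module.finrank k W = Module.finrank k F)
      (hmW : Submodule.span F {((1 : F), m)} ∉ linSet F (W : Set (F × F))) :
      ∃ f : F →ₗ[k] F, θ '' W = f.graph := by
    obtain ⟨f, hf⟩ := exists_eq_graph (U := W.map (θ.restrictScalars k).toLinearMap)
      (by rw [LinearEquiv.finrank_map_eq, hW])
      (by rw [← hθ]; exact mt (span_singleton_apply_mem_linSet_image_iff θ (by simp)).1 hmW)
    exact ⟨f, congrArg (fun X : Submodule k (F × F) => (X : Set (F × F))) hf⟩
  obtain ⟨f, hf⟩ := hgraph hU hm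
  obtain ⟨g, hg⟩ := hgraph hV (hUV ▸ hm)
  refine ⟨f, g, hf ▸ .image_linearEquiv θ _, hg ▸ .image_linearEquiv θ _, ?_⟩
  ext n
  obtain ⟨w, hw⟩ := θ.surjective (1, n)
  have hw0 : w ≠ 0 := by
    rintro rfl
    exact one_ne_zero (congrArg Prod.fst (hw.symm.trans (map_zero θ)))
  rw [mem_directions_iff, mem_directions_iff, ← hf, ← hg, ← hw,
    span_singleton_apply_mem_linSet_image_iff θ hw0,
    span_singleton_apply_mem_linSet_image_iff θ hw0, hUV]

end LinSet

section QuarticLinearSet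

open FiniteField

variable {k F : Type} [Field k] [Field F] [Finite F] [Algebra k F]

theorem finrank_eq_of_card_eq_pow {n : ℕ} (h : Nat.card F = Nat.card k ^ n) :
    Module.finrank k F = n := by
  have : Finite k := Finite.of_injective _ (algebraMap k F).injective
  exact Nat.pow_right_injective (Finite.one_lt_card (α := k))
    (Module.natCard_eq_pow_finrank.symm.trans h)

theorem semilinearEquivalent_graph_of_directions_eq (hF : Module.finrank k F = 4)
    {f g : F →ₗ[k] F} (h : directions f = directions g) :
    SemilinearEquivalent (f.graph : Set (F × F)) g.graph := by
  have : Finite k := Finite.of_injective _ (algebraMap k F).injective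
  have := Fintype.ofFinite k
  have hσ : orderOf (frobeniusAlgEquivOfAlgebraic k F) = 4 := by
    rw [orderOf_frobeniusAlgEquivOfAlgebraic, hF]
  have hgen (τ : Gal(F/k)) : τ ∈ Subgroup.zpowers (frobeniusAlgEquivOfAlgebraic k F) := by
    obtain ⟨n, rfl⟩ := (bijective_frobeniusAlgEquivOfAlgebraic_pow k F).surjective τ
    exact Subgroup.npow_mem_zpowers _ _
  obtain ⟨a, rfl⟩ := exists_linPoly_eq hσ hF f
  obtain ⟨b, rfl⟩ := exists_linPoly_eq hσ hF g
  rcases isScalarConj_or_isScalarConj_adjointCoeffs hgen hσ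
    (principalPermanent_eq_of_directions_eq hF h) with hconj | hconj
  · exact hconj.semilinearEquivalent_graph
  · exact (semilinearEquivalent_graph_adjointCoeffs hgen hσ a).trans
      hconj.semilinearEquivalent_graph

theorem stmt_10_general (hF : Module.finrank k F = 4) {U V : Submodule k (F × F)}
    (hU : Module.finrank k U = 4) (hV : Module.finrank k V = 4)
    (hUV : linSet F (U : Set (F × F)) = linSet F (V : Set (F × F))) :
    SemilinearEquivalent (U : Set (F × F)) V := by
  obtain ⟨f, g, hUf, hVg, hfg⟩ :=
    exists_graphs_of_linSet_eq (hU.trans hF.symm) (hV.trans hF.symm) hUV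
  exact hUf.trans ((semilinearEquivalent_graph_of_directions_eq hF hfg).trans hVg.symm)

end QuarticLinearSet

/-- every `F_q`-linear set of rank 4 of PG(1,q^4) with maximum field of
linearity `F_q` is simple: if `U, V` are rank-4 `F_q`-subspaces of `W = F_{q^4} × F_{q^4}`
with `L_U = L_V`, then some invertible semilinear map of `W` carries `U` to `V`. -/
theorem stmt_10 (p e q : ℕ) (hp : p.Prime) (he : 0 < e) (hq : q = p ^ e)
    (F : Type) [Field F] [Fintype F] (hF : Fintype.card F = q ^ 4)
    (Fq : Subfield F) (hFq : Nat.card Fq = q)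
    (U V : Submodule Fq (F × F))
    (hU : Module.finrank Fq U = 4) (hV : Module.finrank Fq V = 4)
    (hmax : ∀ m : ℕ, m ∣ 4 → 1 < m → ∀ E : Subfield F, Nat.card E = q ^ m →
      ∀ U' : Submodule E (F × F), linSet F (U' : Set (F × F)) ≠ linSet F (U : Set (F × F)))
    (hUV : linSet F (U : Set (F × F)) = linSet F (V : Set (F × F))) :
    ∃ (σ : F ≃+* F) (φ : (F × F) ≃+ (F × F)),
      (∀ (c : F) (w : F × F), φ (c • w) = σ c • φ w) ∧
      φ '' (U : Set (F × F)) = (V : Set (F × F)) := by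
  exact stmt_10_general (finrank_eq_of_card_eq_pow (by rw [Nat.card_eq_fintype_card, hF, hFq]))
    hU hV hUV
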